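/- Assume (H1)–(H4) and γ = αβ. Suppose ∫_{t₀}^∞ r₁(v)^{-1/α} ( ∫_{t₀}^v r₂(u)^{-1/β} ( ∫_{t₀}^u q(s) ds )^{1/β} du )^{1/α} dv = ∞. If limsup_{t→∞} π₁(σ(t))^{γ/β} · ∫_{t₀}^t r₂(u)^{-1/β} ( ∫_{t₀}^u q(s) ds )^{1/β} du > 1, then equation (E) has property A, i.e. every solution of (E) is either oscillatory or tends to 0 as t → ∞. -/

import Mathlib

open Filter MeasureTheory Set

/-- Signed power: for exponents that are quotients of odd positive integers,
`x ^ p` preserves the sign of `x`. -/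
noncomputable def opow (x p : ℝ) : ℝ := Real.sign x * |x| ^ p

/-- `L₁y = r₁ · (y')^α`. -/
noncomputable def L1 (r₁ : ℝ → ℝ) (α : ℝ) (y : ℝ → ℝ) : ℝ → ℝ :=
  fun t => r₁ t * opow (deriv y t) α

/-- `L₂y = r₂ · ((L₁y)')^β`. -/
noncomputable def L2 (r₁ r₂ : ℝ → ℝ) (α β : ℝ) (y : ℝ → ℝ) : ℝ → ℝ :=
  fun t => r₂ t * opow (deriv (L1 r₁ α y) t) β

/-- `L₃y = (L₂y)'`. -/
noncomputable def L3 (r₁ r₂ : ℝ → ℝ) (α β : ℝ) (y : ℝ → ℝ) : ℝ → ℝ :=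
  deriv (L2 r₁ r₂ α β y)

/-- A real number which is a quotient of odd positive integers. -/
def OddQuotient (x : ℝ) : Prop :=
  ∃ m n : ℕ, Odd m ∧ Odd n ∧ 0 < m ∧ 0 < n ∧ x = (m : ℝ) / (n : ℝ)

/-- The standing hypotheses (H1)–(H4). -/
structure Hyp (t₀ α β γ : ℝ) (r₁ r₂ q σ : ℝ → ℝ) : Prop where
  ht₀ : 0 < t₀
  hα : OddQuotient α
  hβ : OddQuotient β
  hγ : OddQuotient γ
  hr₁c : ContinuousOn r₁ (Set.Ici t₀)
  hr₂c : ContinuousOn r₂ (Set.Ici t₀)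
  hr₁p : ∀ t, t₀ ≤ t → 0 < r₁ t
  hr₂p : ∀ t, t₀ ≤ t → 0 < r₂ t
  /-- noncanonical: `π₁(t₀) = ∫_{t₀}^∞ r₁^{-1/α} < ∞` -/
  hπ₁fin : IntegrableOn (fun s => r₁ s ^ (-(1/α))) (Set.Ici t₀)
  /-- noncanonical: `π₂(t₀) = ∫_{t₀}^∞ r₂^{-1/β} < ∞` -/
  hπ₂fin : IntegrableOn (fun s => r₂ s ^ (-(1/β))) (Set.Ici t₀)
  hqc : ContinuousOn q (Set.Ici t₀)
  hq0 : ∀ t, t₀ ≤ t → 0 ≤ q t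
  /-- `q` does not vanish eventually -/
  hqnv : ∀ T, t₀ ≤ T → ∃ t, T ≤ t ∧ q t ≠ 0
  hσd : DifferentiableOn ℝ σ (Set.Ici t₀)
  hσd' : ContinuousOn (deriv σ) (Set.Ici t₀)
  hσpos : ∀ t, t₀ ≤ t → 0 < σ t
  hσadv : ∀ t, t₀ ≤ t → t ≤ σ t
  hσmono : ∀ t, t₀ ≤ t → 0 ≤ deriv σ t

/-- `y` is a (nontrivial) solution of equation (E) on some half-line `[T,∞) ⊆ [t₀,∞)`. -/
def IsSolution (t₀ α β γ : ℝ) (r₁ r₂ q σ y : ℝ → ℝ) : Prop :=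
  ∃ T, t₀ ≤ T ∧
    ContinuousOn y (Set.Ici T) ∧
    DifferentiableOn ℝ y (Set.Ici T) ∧
    ContinuousOn (L1 r₁ α y) (Set.Ici T) ∧
    DifferentiableOn ℝ (L1 r₁ α y) (Set.Ici T) ∧
    ContinuousOn (L2 r₁ r₂ α β y) (Set.Ici T) ∧
    DifferentiableOn ℝ (L2 r₁ r₂ α β y) (Set.Ici T) ∧
    (∀ t, T ≤ t → L3 r₁ r₂ α β y t + q t * opow (y (σ t)) γ = 0) ∧
    (∀ T', T ≤ T' → ∃ t, T' ≤ t ∧ y t ≠ 0)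

/-- A function is oscillatory if it has arbitrarily large zeros. -/
def Oscillatory (y : ℝ → ℝ) : Prop := ∀ T : ℝ, ∃ t, T ≤ t ∧ y t = 0

/-- Equation (E) has property A: every solution is oscillatory or tends to `0`. -/
def PropertyA (t₀ α β γ : ℝ) (r₁ r₂ q σ : ℝ → ℝ) : Prop :=
  ∀ y : ℝ → ℝ, IsSolution t₀ α β γ r₁ r₂ q σ y →
    Oscillatory y ∨ Filter.Tendsto y Filter.atTop (nhds 0)

/-- Equation (E) is oscillatory: every solution is oscillatory. -/
def OscillatoryEq (t₀ α β γ : ℝ) (r₁ r₂ q σ : ℝ → ℝ) : Prop :=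
  ∀ y : ℝ → ℝ, IsSolution t₀ α β γ r₁ r₂ q σ y → Oscillatory y

/-- `π₁(t) = ∫_t^∞ r₁(s)^{-1/α} ds`. -/
noncomputable def pi1 (r₁ : ℝ → ℝ) (α : ℝ) (t : ℝ) : ℝ :=
  ∫ s in Set.Ioi t, r₁ s ^ (-(1/α))

/-- `π₂(t) = ∫_t^∞ r₂(s)^{-1/β} ds`. -/
noncomputable def pi2 (r₂ : ℝ → ℝ) (β : ℝ) (t : ℝ) : ℝ :=
  ∫ s in Set.Ioi t, r₂ s ^ (-(1/β))

/-- `π(t) = ∫_t^∞ r₁(s)^{-1/α} · π₂(s)^{1/α} ds`. -/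
noncomputable def piInf (r₁ r₂ : ℝ → ℝ) (α β : ℝ) (t : ℝ) : ℝ :=
  ∫ s in Set.Ioi t, r₁ s ^ (-(1/α)) * (pi2 r₂ β s) ^ (1/α)

/-- The class `S₁`: `y > 0, L₁y < 0, L₂y < 0, L₃y < 0` on `[t₁,∞)`. -/
def InS1 (r₁ r₂ : ℝ → ℝ) (α β : ℝ) (y : ℝ → ℝ) (t₁ : ℝ) : Prop :=
  ∀ t, t₁ ≤ t → 0 < y t ∧ L1 r₁ α y t < 0 ∧ L2 r₁ r₂ α β y t < 0 ∧ L3 r₁ r₂ α β y t < 0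

/-- The class `S₂`: `y > 0, L₁y < 0, L₂y > 0, L₃y < 0` on `[t₁,∞)`. -/
def InS2 (r₁ r₂ : ℝ → ℝ) (α β : ℝ) (y : ℝ → ℝ) (t₁ : ℝ) : Prop :=
  ∀ t, t₁ ≤ t → 0 < y t ∧ L1 r₁ α y t < 0 ∧ 0 < L2 r₁ r₂ α β y t ∧ L3 r₁ r₂ α β y t < 0

/-- The class `S₃`: `y > 0, L₁y > 0, L₂y > 0, L₃y < 0` on `[t₁,∞)`. -/
def InS3 (r₁ r₂ : ℝ → ℝ) (α β : ℝ) (y : ℝ → ℝ) (t₁ : ℝ) : Prop :=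
  ∀ t, t₁ ≤ t → 0 < y t ∧ 0 < L1 r₁ α y t ∧ 0 < L2 r₁ r₂ α β y t ∧ L3 r₁ r₂ α β y t < 0

/-- The class `S₄`: `y > 0, L₁y > 0, L₂y < 0, L₃y < 0` on `[t₁,∞)`. -/
def InS4 (r₁ r₂ : ℝ → ℝ) (α β : ℝ) (y : ℝ → ℝ) (t₁ : ℝ) : Prop :=
  ∀ t, t₁ ≤ t → 0 < y t ∧ 0 < L1 r₁ α y t ∧ L2 r₁ r₂ α β y t < 0 ∧ L3 r₁ r₂ α β y t < 0


lemma OddQuotient.pos' {x : ℝ} (h : OddQuotient x) : 0 < x := by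
  obtain ⟨m, n, -, -, hm, hn, rfl⟩ := h
  positivity

lemma opow_of_pos' {x : ℝ} (hx : 0 < x) (p : ℝ) : opow x p = x ^ p := by
  simp [opow, Real.sign_of_pos hx, abs_of_pos hx]

lemma opow_neg' (x p : ℝ) : opow (-x) p = - opow x p := by
  simp [opow, Real.sign_neg]

lemma opow_neg_of_neg {x : ℝ} (hx : x < 0) (p : ℝ) : opow x p < 0 := by
  have : 0 < |x| ^ p := Real.rpow_pos_of_pos (abs_pos.2 hx.ne) p
  simp only [opow, Real.sign_of_neg hx]
  linarith

lemma opow_pos_of_pos {x : ℝ} (hx : 0 < x) (p : ℝ) : 0 < opow x p := by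
  rw [opow_of_pos' hx]; exact Real.rpow_pos_of_pos hx p

lemma nonneg_of_opow {r x p : ℝ} (hr : 0 < r) (h : 0 ≤ r * opow x p) : 0 ≤ x := by
  by_contra hx
  have := mul_pos_of_neg_of_neg (opow_neg_of_neg (not_le.1 hx) p) (neg_lt_zero.2 hr)
  linarith

lemma nonpos_of_opow {r x p : ℝ} (hr : 0 < r) (h : r * opow x p ≤ 0) : x ≤ 0 := by
  by_contra hx
  have := mul_pos hr (opow_pos_of_pos (not_le.1 hx) p)
  linarith

lemma le_of_opow {r x p K : ℝ} (hp : 0 < p) (hr : 0 < r) (hK : 0 ≤ K)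
    (h : r * opow x p ≤ -K) : x ≤ -(r ^ (-(1/p)) * K ^ (1/p)) := by
  have hx : x ≤ 0 := nonpos_of_opow hr (by linarith : r * opow x p ≤ 0)
  rcases hx.lt_or_eq with hx | rfl
  · have h1 : opow x p = -((-x) ^ p) := by
      simp [opow, Real.sign_of_neg hx, abs_of_neg hx]
    have h2 : K ≤ r * (-x) ^ p := by rw [h1] at h; linarith
    have h3 : K ^ (1/p) ≤ r ^ (1/p) * (-x) := by
      calc K ^ (1/p) ≤ (r * (-x) ^ p) ^ (1/p) := Real.rpow_le_rpow hK h2 (by positivity)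
        _ = r ^ (1/p) * (-x) := by
          rw [Real.mul_rpow hr.le (Real.rpow_nonneg (by linarith) p), ← Real.rpow_mul (by linarith),
            mul_one_div_cancel hp.ne', Real.rpow_one]
    have h4 : r ^ (-(1/p)) * r ^ (1/p) = 1 := by
      rw [← Real.rpow_add hr]; simp
    have h5 := mul_le_mul_of_nonneg_left h3 (Real.rpow_nonneg hr.le (-(1/p)))
    rw [← mul_assoc, h4] at h5
    linarith
  · have : K = 0 := by simp [opow] at h; linarith
    subst this
    have : (1/p) ≠ 0 := by positivity
    simp [Real.zero_rpow (by simpa using this : p⁻¹ ≠ 0)]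

lemma diffAt_of_Ici {f : ℝ → ℝ} {T t : ℝ} (h : DifferentiableOn ℝ f (Set.Ici T)) (ht : T < t) :
    DifferentiableAt ℝ f t := h.differentiableAt (Ici_mem_nhds ht)

lemma mono_Ici {f : ℝ → ℝ} {T : ℝ} (h : DifferentiableOn ℝ f (Set.Ici T))
    (hd : ∀ t, T < t → 0 ≤ deriv f t) : MonotoneOn f (Set.Ici T) := by
  apply monotoneOn_of_deriv_nonneg (convex_Ici T) h.continuousOn
  · exact h.mono interior_subset
  · intro t ht; rw [interior_Ici] at ht; exact hd t ht

lemma anti_Ici {f : ℝ → ℝ} {T : ℝ} (h : DifferentiableOn ℝ f (Set.Ici T))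
    (hd : ∀ t, T < t → deriv f t ≤ 0) : AntitoneOn f (Set.Ici T) := by
  apply antitoneOn_of_deriv_nonpos (convex_Ici T) h.continuousOn
  · exact h.mono interior_subset
  · intro t ht; rw [interior_Ici] at ht; exact hd t ht

lemma sign_of_mono {f : ℝ → ℝ} {T : ℝ} (h : MonotoneOn f (Set.Ici T)) :
    ∃ T', T ≤ T' ∧ ((∀ t, T' ≤ t → 0 ≤ f t) ∨ (∀ t, T' ≤ t → f t ≤ 0)) := by
  by_cases hc : ∃ s, T ≤ s ∧ 0 ≤ f s
  · obtain ⟨s, hs, h0⟩ := hc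
    exact ⟨s, hs, Or.inl fun t ht => h0.trans (h hs (hs.trans ht) ht)⟩
  · push Not at hc
    exact ⟨T, le_rfl, Or.inr fun t ht => (hc t ht).le⟩

lemma sign_of_anti {f : ℝ → ℝ} {T : ℝ} (h : AntitoneOn f (Set.Ici T)) :
    ∃ T', T ≤ T' ∧ ((∀ t, T' ≤ t → 0 ≤ f t) ∨ (∀ t, T' ≤ t → f t ≤ 0)) := by
  obtain ⟨T', h1, h2 | h2⟩ := sign_of_mono (f := fun t => - f t) (T := T) h.neg
  · exact ⟨T', h1, Or.inr fun t ht => by have := h2 t ht; linarith⟩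
  · exact ⟨T', h1, Or.inl fun t ht => by have := h2 t ht; linarith⟩

lemma intble_Ici {g : ℝ → ℝ} {t₀ a b : ℝ} (hg : ContinuousOn g (Set.Ici t₀)) (ha : t₀ ≤ a)
    (hb : t₀ ≤ b) : IntervalIntegrable g volume a b := by
  apply ContinuousOn.intervalIntegrable
  apply hg.mono
  intro x hx
  exact (le_min ha hb).trans hx.1

lemma hasDeriv_int {g : ℝ → ℝ} {t₀ t : ℝ} (hg : ContinuousOn g (Set.Ici t₀)) (ht : t₀ < t) :
    HasDerivAt (fun t => ∫ s in t₀..t, g s) (g t) t := by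
  apply intervalIntegral.integral_hasDerivAt_right (intble_Ici hg le_rfl ht.le)
  · exact hg.stronglyMeasurableAtFilter_nhdsWithin measurableSet_Ici t |>.filter_mono
      (by rw [nhdsWithin_eq_nhds.2 (Ici_mem_nhds ht)])
  · exact hg.continuousAt (Ici_mem_nhds ht)

lemma cont_int {g : ℝ → ℝ} {t₀ : ℝ} (hg : ContinuousOn g (Set.Ici t₀)) :
    ContinuousOn (fun t => ∫ s in t₀..t, g s) (Set.Ici t₀) := by
  intro t ht
  have hI : IntegrableOn g (Set.uIcc t₀ (t+1)) volume := by
    apply ContinuousOn.integrableOn_compact isCompact_uIcc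
    apply hg.mono
    rw [Set.uIcc_of_le (by have : t₀ ≤ t := ht; linarith)]
    exact Set.Icc_subset_Ici_self
  have := intervalIntegral.continuousOn_primitive_interval hI
  have hle : t₀ ≤ t := ht
  have h1 := this t (by rw [Set.uIcc_of_le (by linarith)]; exact ⟨hle, by linarith⟩)
  apply h1.mono_of_mem_nhdsWithin
  rw [Set.uIcc_of_le (by linarith : t₀ ≤ t + 1), ← Set.Ici_inter_Iic]
  exact inter_mem self_mem_nhdsWithin
    (mem_nhdsWithin_of_mem_nhds (Iic_mem_nhds (by linarith : t < t + 1)))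

lemma mono_int {g : ℝ → ℝ} {t₀ : ℝ} (hg : ContinuousOn g (Set.Ici t₀))
    (h0 : ∀ t, t₀ ≤ t → 0 ≤ g t) :
    MonotoneOn (fun t => ∫ s in t₀..t, g s) (Set.Ici t₀) := by
  intro a ha b hb hab
  have ha' : t₀ ≤ a := ha
  have hb' : t₀ ≤ b := hb
  have := intervalIntegral.integral_add_adjacent_intervals (intble_Ici hg le_rfl ha')
    (intble_Ici hg ha' hb')
  have h2 : 0 ≤ ∫ s in a..b, g s :=
    intervalIntegral.integral_nonneg hab fun u hu => h0 u (ha'.trans hu.1)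
  simp only
  linarith

lemma nonneg_int {g : ℝ → ℝ} {t₀ t : ℝ} (h0 : ∀ t, t₀ ≤ t → 0 ≤ g t) (ht : t₀ ≤ t) :
    0 ≤ ∫ s in t₀..t, g s :=
  intervalIntegral.integral_nonneg ht fun u hu => h0 u hu.1

/-- Comparison: `f' ≤ -k g` and `∫ g = ∞` force `f ≤ -(k/2) ∫ g` eventually. -/
lemma comparison {f g : ℝ → ℝ} {t₀ T k : ℝ} (hT : t₀ ≤ T) (hk : 0 < k)
    (hf : DifferentiableOn ℝ f (Set.Ici T)) (hg : ContinuousOn g (Set.Ici t₀))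
    (hd : ∀ t, T ≤ t → deriv f t ≤ -(k * g t))
    (hG : Tendsto (fun t => ∫ s in t₀..t, g s) atTop atTop) :
    ∃ T', T ≤ T' ∧ ∀ t, T' ≤ t → f t ≤ -(k/2 * ∫ s in t₀..t, g s) := by
  have hA : AntitoneOn (fun t => f t + k * ∫ s in t₀..t, g s) (Set.Ici T) := by
    apply antitoneOn_of_deriv_nonpos (convex_Ici T)
    · exact hf.continuousOn.add (((cont_int hg).mono (Set.Ici_subset_Ici.2 hT)).const_mul k)
    · intro t ht; rw [interior_Ici] at ht
      exact ((diffAt_of_Ici hf ht).add ((hasDeriv_int hg (hT.trans_lt ht)).differentiableAt.const_mul k)).differentiableWithinAt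
    · intro t ht; rw [interior_Ici] at ht
      have := ((diffAt_of_Ici hf ht).hasDerivAt.add ((hasDeriv_int hg (hT.trans_lt ht)).const_mul k)).deriv
      have h2 := hd t (le_of_lt ht)
      change deriv (f + fun t => k * ∫ s in t₀..t, g s) t ≤ 0
      rw [this]; linarith
  obtain ⟨S, hS⟩ := eventually_atTop.1
    (hG.eventually_ge_atTop ((f T + k * ∫ s in t₀..T, g s) / (k/2)))
  refine ⟨max T S, le_max_left _ _, fun t ht => ?_⟩
  have h1 := hA (Set.mem_Ici.2 le_rfl) (Set.mem_Ici.2 ((le_max_left _ _).trans ht))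
    ((le_max_left _ _).trans ht)
  have h2 := hS t ((le_max_right _ _).trans ht)
  rw [div_le_iff₀ (by positivity)] at h2
  simp only at h1
  linarith

lemma diverge {w F : ℝ → ℝ} {t₀ p : ℝ} (hp : 0 < p) (hwc : ContinuousOn w (Set.Ici t₀))
    (hFc : ContinuousOn F (Set.Ici t₀)) (hw0 : ∀ t, t₀ ≤ t → 0 ≤ w t)
    (hF0 : ∀ t, t₀ ≤ t → 0 ≤ F t) (hF : MonotoneOn F (Set.Ici t₀))
    (hwi : IntegrableOn w (Set.Ici t₀))
    (hG : Tendsto (fun t => ∫ s in t₀..t, w s * F s ^ p) atTop atTop) :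
    Tendsto F atTop atTop := by
  rw [tendsto_atTop]
  intro M
  by_contra hM
  have hb : ∀ t, t₀ ≤ t → F t ≤ M := by
    intro t ht
    by_contra hlt
    apply hM
    filter_upwards [eventually_ge_atTop t] with s hs
    exact (not_le.1 hlt).le.trans (hF ht (ht.trans hs) hs)
  have hM0 : 0 ≤ M := (hF0 t₀ le_rfl).trans (hb t₀ le_rfl)
  have hbound : ∀ t, t₀ ≤ t → ∫ s in t₀..t, w s * F s ^ p ≤ (∫ s in Set.Ici t₀, w s) * M ^ p := by
    intro t ht
    calc ∫ s in t₀..t, w s * F s ^ p ≤ ∫ s in t₀..t, w s * M ^ p := by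
          apply intervalIntegral.integral_mono_on ht
          · exact intble_Ici (hwc.mul (hFc.rpow_const fun _ _ => Or.inr hp.le)) le_rfl ht
          · exact intble_Ici (hwc.mul continuousOn_const) le_rfl ht
          · intro s hs
            exact mul_le_mul_of_nonneg_left
              (Real.rpow_le_rpow (hF0 s hs.1) (hb s hs.1) hp.le) (hw0 s hs.1)
      _ = (∫ s in t₀..t, w s) * M ^ p := by rw [intervalIntegral.integral_mul_const]
      _ ≤ _ := by
          apply mul_le_mul_of_nonneg_right _ (Real.rpow_nonneg hM0 p)
          rw [intervalIntegral.integral_of_le ht]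
          apply setIntegral_mono_set hwi
          · filter_upwards [ae_restrict_mem measurableSet_Ici] with s hs
            exact hw0 s hs
          · exact (Set.Ioc_subset_Icc_self.trans Set.Icc_subset_Ici_self).eventuallyLE
  obtain ⟨t, h1, h2⟩ := ((hG.eventually_gt_atTop ((∫ s in Set.Ici t₀, w s) * M ^ p)).and
    (eventually_ge_atTop t₀)).exists
  linarith [hbound t h2]

/-- A solution bounded below by a positive constant cannot exist. -/
lemma no_lower_bound {t₀ α β γ : ℝ} {r₁ r₂ q σ y : ℝ → ℝ}
    (H : Hyp t₀ α β γ r₁ r₂ q σ)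
    (hdiv : Filter.Tendsto (fun t => ∫ v in t₀..t, r₁ v ^ (-(1/α)) *
      (∫ u in t₀..v, r₂ u ^ (-(1/β)) * (∫ s in t₀..u, q s) ^ (1/β)) ^ (1/α))
      Filter.atTop Filter.atTop) {T c : ℝ} (hT : t₀ ≤ T) (hc : 0 < c)
    (hyc : ∀ t, T ≤ t → c ≤ y t)
    (hy : DifferentiableOn ℝ y (Set.Ici T))
    (hL1 : DifferentiableOn ℝ (L1 r₁ α y) (Set.Ici T))
    (hL2 : DifferentiableOn ℝ (L2 r₁ r₂ α β y) (Set.Ici T))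
    (hE : ∀ t, T ≤ t → L3 r₁ r₂ α β y t + q t * opow (y (σ t)) γ = 0) : False := by
  have hα := H.hα.pos'
  have hβ := H.hβ.pos'
  have hγ := H.hγ.pos'
  have hα' : 0 < 1/α := by positivity
  have hβ' : 0 < 1/β := by positivity
  have w1c : ContinuousOn (fun v => r₁ v ^ (-(1/α))) (Set.Ici t₀) :=
    H.hr₁c.rpow_const fun t ht => Or.inl (H.hr₁p t ht).ne'
  have w2c : ContinuousOn (fun v => r₂ v ^ (-(1/β))) (Set.Ici t₀) :=
    H.hr₂c.rpow_const fun t ht => Or.inl (H.hr₂p t ht).ne'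
  have w1p : ∀ t, t₀ ≤ t → 0 ≤ r₁ t ^ (-(1/α)) := fun t ht => Real.rpow_nonneg (H.hr₁p t ht).le _
  have w2p : ∀ t, t₀ ≤ t → 0 ≤ r₂ t ^ (-(1/β)) := fun t ht => Real.rpow_nonneg (H.hr₂p t ht).le _
  set Q : ℝ → ℝ := fun u => ∫ s in t₀..u, q s with hQ
  have Qc : ContinuousOn Q (Set.Ici t₀) := cont_int H.hqc
  have Q0 : ∀ t, t₀ ≤ t → 0 ≤ Q t := fun t ht => nonneg_int H.hq0 ht
  have Qm : MonotoneOn Q (Set.Ici t₀) := mono_int H.hqc H.hq0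
  set j : ℝ → ℝ := fun u => r₂ u ^ (-(1/β)) * Q u ^ (1/β) with hj
  have jc : ContinuousOn j (Set.Ici t₀) := w2c.mul (Qc.rpow_const fun _ _ => Or.inr hβ'.le)
  have j0 : ∀ t, t₀ ≤ t → 0 ≤ j t := fun t ht => mul_nonneg (w2p t ht) (Real.rpow_nonneg (Q0 t ht) _)
  set J : ℝ → ℝ := fun v => ∫ u in t₀..v, j u with hJ
  have Jc : ContinuousOn J (Set.Ici t₀) := cont_int jc
  have J0 : ∀ t, t₀ ≤ t → 0 ≤ J t := fun t ht => nonneg_int j0 ht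
  have Jm : MonotoneOn J (Set.Ici t₀) := mono_int jc j0
  set m : ℝ → ℝ := fun v => r₁ v ^ (-(1/α)) * J v ^ (1/α) with hm
  have mc : ContinuousOn m (Set.Ici t₀) := w1c.mul (Jc.rpow_const fun _ _ => Or.inr hα'.le)
  have hdiv' : Tendsto (fun t => ∫ v in t₀..t, m v) atTop atTop := hdiv
  have Jtop : Tendsto J atTop atTop := diverge hα' w1c Jc w1p J0 Jm H.hπ₁fin hdiv'
  have Qtop : Tendsto Q atTop atTop := diverge hβ' w2c Qc w2p Q0 Qm H.hπ₂fin Jtop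
  -- step 1
  have hk1 : 0 < c ^ γ := Real.rpow_pos_of_pos hc γ
  obtain ⟨T1, hT1, h1⟩ := comparison hT hk1 hL2 H.hqc (fun t ht => by
    have e := hE t ht
    have hs := hyc (σ t) (ht.trans (H.hσadv t (hT.trans ht)))
    rw [opow_of_pos' (hc.trans_le hs)] at e
    have h2 := mul_le_mul_of_nonneg_left (Real.rpow_le_rpow hc.le hs hγ.le) (H.hq0 t (hT.trans ht))
    have e' : deriv (L2 r₁ r₂ α β y) t + q t * y (σ t) ^ γ = 0 := e
    linarith) Qtop
  have hk2 : 0 < (c ^ γ / 2) ^ (1/β) := Real.rpow_pos_of_pos (by positivity) _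
  obtain ⟨T2, hT2, h2⟩ := comparison (hT.trans hT1) hk2 (hL1.mono (Set.Ici_subset_Ici.2 hT1)) jc
    (fun t ht => by
      have ht0 : t₀ ≤ t := hT.trans (hT1.trans ht)
      have := le_of_opow hβ (H.hr₂p t ht0) (mul_nonneg (by positivity) (Q0 t ht0)) (h1 t ht)
      rw [Real.mul_rpow (by positivity) (Q0 t ht0)] at this
      refine this.trans (le_of_eq ?_)
      simp only [hj]; ring) Jtop
  have hk3 : 0 < ((c ^ γ / 2) ^ (1/β) / 2) ^ (1/α) := Real.rpow_pos_of_pos (by positivity) _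
  obtain ⟨T3, hT3, h3⟩ := comparison (hT.trans (hT1.trans hT2)) hk3
    (hy.mono (Set.Ici_subset_Ici.2 (hT1.trans hT2))) mc
    (fun t ht => by
      have ht0 : t₀ ≤ t := hT.trans (hT1.trans (hT2.trans ht))
      have := le_of_opow hα (H.hr₁p t ht0) (mul_nonneg (by positivity) (J0 t ht0)) (h2 t ht)
      rw [Real.mul_rpow (by positivity) (J0 t ht0)] at this
      refine this.trans (le_of_eq ?_)
      simp only [hm]; ring) hdiv'
  have hT3' : T ≤ T3 := hT1.trans (hT2.trans hT3)
  have a := h3 T3 le_rfl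
  have b := hyc T3 hT3'
  have d : 0 ≤ ∫ s in t₀..T3, m s := nonneg_int (fun t ht => mul_nonneg (w1p t ht)
    (Real.rpow_nonneg (J0 t ht) _)) (hT.trans hT3')
  have := mul_nonneg (half_pos hk3).le d
  linarith

lemma pos_case {t₀ α β γ : ℝ} {r₁ r₂ q σ y : ℝ → ℝ}
    (H : Hyp t₀ α β γ r₁ r₂ q σ)
    (hdiv : Filter.Tendsto (fun t => ∫ v in t₀..t, r₁ v ^ (-(1/α)) *
      (∫ u in t₀..v, r₂ u ^ (-(1/β)) * (∫ s in t₀..u, q s) ^ (1/β)) ^ (1/α))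
      Filter.atTop Filter.atTop) {T : ℝ} (hT : t₀ ≤ T)
    (hyp : ∀ t, T ≤ t → 0 < y t)
    (hy : DifferentiableOn ℝ y (Set.Ici T))
    (hL1 : DifferentiableOn ℝ (L1 r₁ α y) (Set.Ici T))
    (hL2 : DifferentiableOn ℝ (L2 r₁ r₂ α β y) (Set.Ici T))
    (hE : ∀ t, T ≤ t → L3 r₁ r₂ α β y t + q t * opow (y (σ t)) γ = 0) :
    Tendsto y atTop (nhds 0) := by
  have key : ∀ S c, T ≤ S → 0 < c → ¬ ∀ t, S ≤ t → c ≤ y t := fun S c hS hc hall =>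
    no_lower_bound H hdiv (hT.trans hS) hc hall (hy.mono (Set.Ici_subset_Ici.2 hS))
      (hL1.mono (Set.Ici_subset_Ici.2 hS)) (hL2.mono (Set.Ici_subset_Ici.2 hS))
      fun t ht => hE t (hS.trans ht)
  have A2 : AntitoneOn (L2 r₁ r₂ α β y) (Set.Ici T) := anti_Ici hL2 fun t ht => by
    have e : deriv (L2 r₁ r₂ α β y) t + q t * opow (y (σ t)) γ = 0 := hE t ht.le
    have := mul_nonneg (H.hq0 t (hT.trans ht.le))
      (opow_pos_of_pos (hyp (σ t) (ht.le.trans (H.hσadv t (hT.trans ht.le)))) γ).le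
    linarith
  obtain ⟨T1, hT1, s2⟩ := sign_of_anti A2
  have hs1 : ∃ T2, T1 ≤ T2 ∧ ((∀ t, T2 ≤ t → 0 ≤ L1 r₁ α y t) ∨ (∀ t, T2 ≤ t → L1 r₁ α y t ≤ 0)) := by
    have hD := hL1.mono (Set.Ici_subset_Ici.2 hT1)
    rcases s2 with s2 | s2
    · exact sign_of_mono (mono_Ici hD fun t ht =>
        nonneg_of_opow (H.hr₂p t (hT.trans (hT1.trans ht.le))) (s2 t ht.le))
    · exact sign_of_anti (anti_Ici hD fun t ht =>
        nonpos_of_opow (H.hr₂p t (hT.trans (hT1.trans ht.le))) (s2 t ht.le))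
  obtain ⟨T2, hT2, s1⟩ := hs1
  have hT2' : T ≤ T2 := hT1.trans hT2
  have hD := hy.mono (Set.Ici_subset_Ici.2 hT2')
  rcases s1 with s1 | s1
  · exfalso
    have hm := mono_Ici hD fun t ht =>
        nonneg_of_opow (H.hr₁p t (hT.trans (hT2'.trans ht.le))) (s1 t ht.le)
    exact key T2 (y T2) hT2' (hyp T2 hT2') fun t ht => hm (Set.mem_Ici.2 le_rfl) ht ht
  · have hm := anti_Ici hD fun t ht =>
        nonpos_of_opow (H.hr₁p t (hT.trans (hT2'.trans ht.le))) (s1 t ht.le)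
    rw [Metric.tendsto_atTop]
    intro ε hε
    have := key T2 ε hT2' hε
    push Not at this
    obtain ⟨S, hS, hlt⟩ := this
    refine ⟨S, fun t ht => ?_⟩
    rw [Real.dist_eq, sub_zero, abs_of_pos (hyp t (hT2'.trans (hS.trans ht)))]
    exact (hm hS (hS.trans ht) ht).trans_lt hlt

lemma L1_neg (r₁ : ℝ → ℝ) (α : ℝ) (y : ℝ → ℝ) : L1 r₁ α (-y) = - L1 r₁ α y := by
  funext t
  simp [L1, deriv.neg', opow_neg']

lemma L2_neg (r₁ r₂ : ℝ → ℝ) (α β : ℝ) (y : ℝ → ℝ) : L2 r₁ r₂ α β (-y) = - L2 r₁ r₂ α β y := by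
  funext t
  simp [L2, L1_neg, deriv.neg', opow_neg']

lemma L3_neg (r₁ r₂ : ℝ → ℝ) (α β : ℝ) (y : ℝ → ℝ) : L3 r₁ r₂ α β (-y) = - L3 r₁ r₂ α β y := by
  funext t
  simp [L3, L2_neg, deriv.neg']

theorem propertyA_of_limsup' (t₀ α β γ : ℝ) (r₁ r₂ q σ : ℝ → ℝ)
    (H : Hyp t₀ α β γ r₁ r₂ q σ)
    (hγαβ : γ = α * β)
    (hdiv : Filter.Tendsto (fun t => ∫ v in t₀..t, r₁ v ^ (-(1/α)) *
      (∫ u in t₀..v, r₂ u ^ (-(1/β)) * (∫ s in t₀..u, q s) ^ (1/β)) ^ (1/α))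
      Filter.atTop Filter.atTop)
    (hls : 1 < Filter.limsup (fun t => (pi1 r₁ α (σ t)) ^ (γ/β) *
      ∫ u in t₀..t, r₂ u ^ (-(1/β)) * (∫ s in t₀..u, q s) ^ (1/β)) Filter.atTop) :
    PropertyA t₀ α β γ r₁ r₂ q σ := by
  intro y hsol
  obtain ⟨T, hT, hyc, hy, -, hL1, -, hL2, hE, -⟩ := hsol
  by_cases ho : Oscillatory y
  · exact Or.inl ho
  right
  unfold Oscillatory at ho
  push Not at ho
  obtain ⟨S, hS⟩ := ho
  set R := max T S with hR
  have hTR : T ≤ R := le_max_left _ _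
  have hne : ∀ t, R ≤ t → y t ≠ 0 := fun t ht => hS t ((le_max_right _ _).trans ht)
  have hsub := Set.Ici_subset_Ici.2 hTR
  have hcont : ContinuousOn y (Set.Ici R) := hyc.mono hsub
  have ivt : ∀ t, R ≤ t → Set.uIcc (y R) (y t) ⊆ y '' Set.uIcc R t := fun t ht =>
    intermediate_value_uIcc (hcont.mono (by
      rw [Set.uIcc_of_le ht]; exact Set.Icc_subset_Ici_self))
  have no0 : ∀ t, R ≤ t → (0 : ℝ) ∉ Set.uIcc (y R) (y t) := by
    intro t ht h0
    obtain ⟨s, hs, hs0⟩ := ivt t ht h0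
    rw [Set.uIcc_of_le ht] at hs
    exact hne s hs.1 hs0
  rcases lt_or_gt_of_ne (hne R le_rfl) with h | h
  · have hneg : ∀ t, R ≤ t → 0 < (-y) t := by
      intro t ht
      by_contra hc
      have hc' : 0 ≤ y t := by simpa using hc
      exact no0 t ht (Set.mem_uIcc.2 (Or.inl ⟨h.le, hc'⟩))
    have := pos_case (y := -y) H hdiv (hT.trans hTR) hneg (hy.mono hsub).neg
      (by rw [L1_neg]; exact (hL1.mono hsub).neg) (by rw [L2_neg]; exact (hL2.mono hsub).neg)
      (fun t ht => by
        have e := hE t (hTR.trans ht)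
        rw [L3_neg]
        simp only [Pi.neg_apply, opow_neg']
        linarith)
    have h2 := this.neg
    simpa using h2
  · have hpos : ∀ t, R ≤ t → 0 < y t := by
      intro t ht
      by_contra hc
      exact no0 t ht (Set.mem_uIcc.2 (Or.inr ⟨not_lt.1 hc, h.le⟩))
    exact pos_case H hdiv (hT.trans hTR) hpos (hy.mono hsub) (hL1.mono hsub) (hL2.mono hsub)
      fun t ht => hE t (hTR.trans ht)
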